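/- arXiv:2503.04663 — 2 statements merged into one kernel-verified Lean document; each statement's English description precedes it below -/
import Mathlib

section
/- (Corollary: exponential generating function of the bivariate Laguerre polynomials.) For all real x, y and all real s, t with |s| + |t| < 1, the doubly indexed series Σ_{(n,m)∈ℕ×ℕ} L_{n,m}(x,y)·(s^n/n!)·(t^m/m!) converges, with sum equal to exp((−s·x − t·y)/(1 − s − t))/(1 − s − t). -/
/-!
In the double sum defining `L_{n,m}`, write `σ` for the exponent of `-x` and `i` for that of `-y`,
and put `n = σ + a`, `m = i + b`. The two binomial coefficients then combine into

`C(m+n, m-i) C(n+i, n-σ) = (m+n)! / (a! b! (i+σ)!) = C(a+b, a) C(a+b+k, k)`, with `k = σ + i`,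

so the series is a regrouping, along `(σ, i, a, b) ↦ (σ + a, i + b)`, of the fourfold series

`∑_{σ,i} (-xs)^σ/σ! (-yt)^i/i! ∑_{a,b} C(a+b, a) C(a+b+k, k) s^a t^b`.

By the binomial theorem and the negative binomial series the inner sum is `(1-s-t)^{-(k+1)}`
(`hasSum_lagInner`), and the outer sum is then a product of two exponential series
(`hasSum_lagOuter`). Replacing all parameters by their absolute values turns each term into its
absolute value, which gives the absolute convergence that justifies the rearrangements.
-/

open Nat Finset

/-- Bivariate Laguerre polynomial. -/
noncomputable def lag2 (n m : ℕ) (x y : ℝ) : ℝ :=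
  ∑ i ∈ Finset.range (m + 1), ∑ s ∈ Finset.range (n + 1),
    (n ! : ℝ) * (m ! : ℝ) / ((i ! : ℝ) * (s ! : ℝ)) * ((m + n).choose (m - i)) *
      ((n + i).choose (n - s)) * (-x) ^ s * (-y) ^ i

/-- The coefficient `(a+b+k)! / (a! b! k!)` of the inner series, times `s^a t^b`. -/
noncomputable def lagInner (k : ℕ) (s t : ℝ) (q : ℕ × ℕ) : ℝ :=
  ((q.1 + q.2).choose q.1 : ℝ) * ((q.1 + q.2 + k).choose k : ℝ) * (s ^ q.1 * t ^ q.2)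

/-- The term of a product of two exponential series. -/
noncomputable def lagOuter (X Y : ℝ) (p : ℕ × ℕ) : ℝ :=
  X ^ p.1 / (p.1 ! : ℝ) * (Y ^ p.2 / (p.2 ! : ℝ))

/-- The term of the fourfold series, indexed by `((σ, i), (a, b))`. -/
noncomputable def lagTerm (X Y s t : ℝ) (z : (ℕ × ℕ) × (ℕ × ℕ)) : ℝ :=
  lagOuter X Y z.1 * lagInner (z.1.1 + z.1.2) s t z.2

lemma abs_lagInner (k : ℕ) (s t : ℝ) (q : ℕ × ℕ) :
    |lagInner k s t q| = lagInner k |s| |t| q := by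
  simp [lagInner, abs_mul, abs_pow]

lemma abs_lagOuter (X Y : ℝ) (p : ℕ × ℕ) : |lagOuter X Y p| = lagOuter |X| |Y| p := by
  simp [lagOuter, abs_mul, abs_pow, abs_div]

lemma abs_lagTerm (X Y s t : ℝ) (z : (ℕ × ℕ) × (ℕ × ℕ)) :
    |lagTerm X Y s t z| = lagTerm |X| |Y| |s| |t| z := by
  simp [lagTerm, abs_mul, abs_lagInner, abs_lagOuter]

lemma sum_antidiagonal_lagInner (k : ℕ) (s t : ℝ) (N : ℕ) :
    ∑ q ∈ antidiagonal N, lagInner k s t q = ((N + k).choose k : ℝ) * (s + t) ^ N := by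
  rw [(Commute.all s t).add_pow', Finset.mul_sum]
  refine Finset.sum_congr rfl fun q hq => ?_
  rw [HasAntidiagonal.mem_antidiagonal] at hq
  rw [lagInner, hq, nsmul_eq_mul]
  ring

lemma summable_lagInner (k : ℕ) (s t : ℝ) (h : |s| + |t| < 1) : Summable (lagInner k s t) := by
  apply Summable.of_abs
  simp only [abs_lagInner]
  rw [← (HasAntidiagonal.sigmaAntidiagonalEquivProd (A := ℕ)).summable_iff, summable_sigma_of_nonneg]
  · refine ⟨fun N => Summable.of_finite, ?_⟩
    have hs : ∀ N : ℕ, ∑' q : antidiagonal N, lagInner k |s| |t| q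
        = ((N + k).choose k : ℝ) * (|s| + |t|) ^ N := fun N => by
      rw [Finset.tsum_subtype (antidiagonal N) (lagInner k |s| |t|), sum_antidiagonal_lagInner]
    refine Summable.congr (f := fun N : ℕ => ((N + k).choose k : ℝ) * (|s| + |t|) ^ N) ?_
      (fun N => (hs N).symm)
    refine summable_choose_mul_geometric_of_norm_lt_one k ?_
    rwa [Real.norm_eq_abs, abs_of_nonneg (by positivity)]
  · intro z
    exact (abs_nonneg _).trans_eq (abs_lagInner k s t _)

lemma hasSum_lagInner (k : ℕ) (s t : ℝ) (h : |s| + |t| < 1) :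
    HasSum (lagInner k s t) (1 / (1 - (s + t)) ^ (k + 1)) := by
  have h1 := (HasAntidiagonal.sigmaAntidiagonalEquivProd (A := ℕ)).hasSum_iff.mpr
    (summable_lagInner k s t h).hasSum
  have h2 := h1.sigma (g := fun N : ℕ => ((N + k).choose k : ℝ) * (s + t) ^ N) (fun N => by
    rw [← sum_antidiagonal_lagInner]
    exact Finset.hasSum (antidiagonal N) (lagInner k s t))
  have h3 := hasSum_choose_mul_geometric_of_norm_lt_one (𝕜 := ℝ) k (r := s + t)
    ((abs_add_le s t).trans_lt h)
  rw [← h2.unique h3]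
  exact (summable_lagInner k s t h).hasSum

lemma hasSum_lagOuter (X Y : ℝ) : HasSum (lagOuter X Y) (Real.exp X * Real.exp Y) := by
  have e : ∀ z : ℝ, HasSum (fun n : ℕ => z ^ n / (n ! : ℝ)) (Real.exp z) := fun z => by
    rw [Real.exp_eq_exp_ℝ]
    exact NormedSpace.expSeries_div_hasSum_exp z
  have hn : ∀ z : ℝ, Summable fun n : ℕ => ‖z ^ n / (n ! : ℝ)‖ := fun z =>
    (e z).summable.norm
  exact HasSum.mul (f := fun n : ℕ => X ^ n / (n ! : ℝ)) (g := fun n : ℕ => Y ^ n / (n ! : ℝ))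
    (e X) (e Y) (summable_mul_of_summable_norm (hn X) (hn Y))

/-- The summands here are the sums of `lagTerm` over `(a, b)` for fixed `p = (σ, i)`. -/
lemma hasSum_lagRows (X Y s t : ℝ) :
    HasSum (fun p : ℕ × ℕ => lagOuter X Y p * (1 / (1 - (s + t)) ^ (p.1 + p.2 + 1)))
      (Real.exp ((X + Y) / (1 - s - t)) / (1 - s - t)) := by
  have h := (hasSum_lagOuter (X / (1 - s - t)) (Y / (1 - s - t))).div_const (1 - s - t)
  rw [← Real.exp_add, ← add_div] at h
  refine h.congr_fun ?_
  intro p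
  simp only [lagOuter, div_pow, ← sub_sub, pow_add, pow_one]
  simp only [div_eq_mul_inv, mul_inv]
  ring

lemma hasSum_lagTerm (X Y s t : ℝ) (h : |s| + |t| < 1) :
    HasSum (lagTerm X Y s t) (Real.exp ((X + Y) / (1 - s - t)) / (1 - s - t)) := by
  have row : ∀ X Y s t : ℝ, |s| + |t| < 1 → ∀ p : ℕ × ℕ,
      HasSum (fun q => lagTerm X Y s t (p, q))
        (lagOuter X Y p * (1 / (1 - (s + t)) ^ (p.1 + p.2 + 1))) := fun X Y s t h p =>
    (hasSum_lagInner (p.1 + p.2) s t h).mul_left _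
  have hsum : Summable (lagTerm X Y s t) := by
    apply Summable.of_abs
    simp only [abs_lagTerm]
    have h' : |(|s|)| + |(|t|)| < 1 := by simpa using h
    rw [summable_prod_of_nonneg]
    · refine ⟨fun p => (row _ _ _ _ h' p).summable, ?_⟩
      simp only [fun p => (row |X| |Y| |s| |t| h' p).tsum_eq]
      exact (hasSum_lagRows _ _ _ _).summable
    · intro z
      exact (abs_nonneg _).trans_eq (abs_lagTerm X Y s t z)
  rw [← (hsum.hasSum.prod_fiberwise (row X Y s t h)).unique (hasSum_lagRows X Y s t)]
  exact hsum.hasSum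

/-- Both sides equal `(σ+a+i+b)! / (a! b! (σ+i)!)`. -/
lemma choose_mul_choose_lag (σ i a b : ℕ) :
    (((i + b + (σ + a)).choose b : ℕ) : ℝ) * ((σ + a + i).choose a : ℕ) =
      ((a + b).choose a : ℕ) * ((a + b + (σ + i)).choose (σ + i) : ℕ) := by
  have e1 : i + b + (σ + a) = b + (σ + a + i) := by ring
  have e2 : σ + a + i = a + (σ + i) := by ring
  rw [e1, Nat.cast_add_choose, e2, Nat.cast_add_choose, Nat.cast_add_choose,
    add_comm (a + b) (σ + i), Nat.cast_add_choose]
  have e3 : b + (a + (σ + i)) = σ + i + (a + b) := by ring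
  rw [e3]
  have p := fun n : ℕ => (Nat.cast_ne_zero (R := ℝ)).mpr (Nat.factorial_ne_zero n)
  have := p a
  have := p b
  have := p (a + b)
  have := p (σ + i)
  have := p (a + (σ + i))
  field_simp

/-- The terms of the generating series are the sums of `lagTerm` over the fibres of
`((σ, i), (a, b)) ↦ (σ + a, i + b)`. -/
lemma lag2_eq_sum_lagTerm (x y s t : ℝ) (n m : ℕ) :
    lag2 n m x y * (s ^ n / (n ! : ℝ)) * (t ^ m / (m ! : ℝ)) =
      ∑ p ∈ range (n + 1) ×ˢ range (m + 1),
        lagTerm (-s * x) (-t * y) s t (p, (n - p.1, m - p.2)) := by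
  rw [lag2, Finset.sum_comm, ← Finset.sum_product', Finset.sum_mul, Finset.sum_mul]
  refine Finset.sum_congr rfl fun p hp => ?_
  obtain ⟨σ, i⟩ := p
  simp only [mem_product, Finset.mem_range, Nat.lt_succ_iff] at hp
  obtain ⟨a, rfl⟩ := Nat.exists_eq_add_of_le hp.1
  obtain ⟨b, rfl⟩ := Nat.exists_eq_add_of_le hp.2
  simp only [lagTerm, lagOuter, lagInner, Nat.add_sub_cancel_left]
  rw [← choose_mul_choose_lag]
  have p := fun n : ℕ => (Nat.cast_ne_zero (R := ℝ)).mpr (Nat.factorial_ne_zero n)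
  have := p σ
  have := p i
  have := p (σ + a)
  have := p (i + b)
  field_simp
  ring

theorem bivariate_laguerre_egf (x y s t : ℝ) (h : |s| + |t| < 1) :
    HasSum
      (fun p : ℕ × ℕ =>
        lag2 p.1 p.2 x y * (s ^ p.1 / (p.1 ! : ℝ)) * (t ^ p.2 / (p.2 ! : ℝ)))
      (Real.exp ((-s * x - t * y) / (1 - s - t)) / (1 - s - t)) := by
  have key := (hasSum_lagTerm (-s * x) (-t * y) s t h).tsum_fiberwise
    (fun z : (ℕ × ℕ) × (ℕ × ℕ) => z.1 + z.2)
  have e : -s * x + -t * y = -s * x - t * y := by ring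
  rw [e] at key
  refine key.congr_fun ?_
  rintro ⟨n, m⟩
  rw [lag2_eq_sum_lagTerm]
  have hfib : (fun z : (ℕ × ℕ) × (ℕ × ℕ) => z.1 + z.2) ⁻¹' {(n, m)} =
      ↑((range (n + 1) ×ˢ range (m + 1)).image
        (fun p : ℕ × ℕ => (p, (n - p.1, m - p.2)))) := by
    ext ⟨⟨σ, i⟩, ⟨a, b⟩⟩
    simp only [Set.mem_preimage, Set.mem_singleton_iff, Prod.mk_add_mk, Prod.mk.injEq,
      coe_image, Set.mem_image, SetLike.mem_coe, mem_product, Finset.mem_range, Prod.exists]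
    constructor
    · rintro ⟨rfl, rfl⟩
      exact ⟨σ, i, ⟨by omega, by omega⟩, ⟨rfl, rfl⟩, by omega, by omega⟩
    · rintro ⟨_, _, ⟨_, _⟩, ⟨rfl, rfl⟩, rfl, rfl⟩
      omega
  rw [hfib, Finset.tsum_subtype', Finset.sum_image]
  exact fun p _ q _ hpq => congrArg Prod.fst hpq
end

section
/- (Theorem 2, identity (21).) For every natural number k ≥ 1 and every real x ≠ 0: Σ_{n=0}^k x^{k−n}·C(k,n)·L_{n,k−n}(x, 1/x) = L_k(1)·(1 + x)^k. -/
open Nat Finset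

/-- Generalized Laguerre polynomial of order `α` with integer coefficients;
`L_n(x)` denotes `lag n 0 x`. -/
noncomputable def lag (n α : ℕ) (x : ℝ) : ℝ :=
  ∑ k ∈ Finset.range (n + 1), (n ! : ℝ) / (k ! : ℝ) * ((n + α).choose (n - k)) * (-x) ^ k

/-!
Writing `m = k - n`, the coefficient of `x ^ (m - i + s)` in the left-hand side factors, because
`C(k, n) n! m! = k!` and, by trinomial revision,
`C(k, n + i) C(n + i, i + s) = C(k, i + s) C(k - i - s, n - s)` (`lag2_term`).
After the substitution `j = i + s`, `t = n - s`, the triple sum separates for each `j` into two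
binomial sums: the one over `t` equals `(1 + x) ^ (k - j)`, the one over `s` equals
`(1 + x) ^ j / j!`. Their product contributes `(1 + x) ^ k` for every `j`, and what remains is the
sum over `j` defining `L_k(1)`.
-/

/-- The factorization of a single term, in the free parameters `i`, `s`, `t = n - s` and
`r = k - n - i`; all binomial coefficients reduce to factorials. -/
lemma lag2_term (i s t r : ℕ) (x : ℝ) (hx : x ≠ 0) :
    x ^ (i + r) * ((i + r + (s + t)).choose (s + t) : ℝ) *
      (((s + t)! : ℝ) * ((i + r)! : ℝ) / ((i ! : ℝ) * (s ! : ℝ)) *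
        ((i + r + (s + t)).choose r) * ((s + t + i).choose t) * (-x) ^ s * (-(1 / x)) ^ i)
    = ((i + r + (s + t))! : ℝ) * (-1) ^ (i + s) * ((i + r + (s + t)).choose (i + s)) *
      (x ^ s / ((i ! : ℝ) * (s ! : ℝ))) * (((t + r).choose t : ℝ) * x ^ r) := by
  have e1 : ((i + r + (s + t)).choose (s + t) : ℝ)
      = ((i + r + (s + t))! : ℝ) / ((s + t)! * (i + r)!) := by
    rw [show i + r + (s + t) = (s + t) + (i + r) by ring, Nat.cast_add_choose]
  have e2 : ((i + r + (s + t)).choose r : ℝ)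
      = ((i + r + (s + t))! : ℝ) / (r ! * (s + t + i)!) := by
    rw [show i + r + (s + t) = r + (s + t + i) by ring, Nat.cast_add_choose]
  have e3 : ((s + t + i).choose t : ℝ) = ((s + t + i)! : ℝ) / (t ! * (i + s)!) := by
    rw [show s + t + i = t + (i + s) by ring, Nat.cast_add_choose]
  have e4 : ((i + r + (s + t)).choose (i + s) : ℝ)
      = ((i + r + (s + t))! : ℝ) / ((i + s)! * (t + r)!) := by
    rw [show i + r + (s + t) = (i + s) + (t + r) by ring, Nat.cast_add_choose]
  have e5 : ((t + r).choose t : ℝ) = ((t + r)! : ℝ) / (t ! * r !) := Nat.cast_add_choose ℝ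
  have hs : (-x) ^ s = (-1) ^ s * x ^ s := by rw [← mul_pow, neg_one_mul]
  have hi : (-(1 / x)) ^ i = (-1) ^ i / x ^ i := by rw [← div_pow, neg_div]
  have f (n : ℕ) : (n ! : ℝ) ≠ 0 := by exact_mod_cast n.factorial_ne_zero
  have f1 := f i; have f2 := f s; have f3 := f t; have f4 := f r
  have f5 := f (s + t); have f6 := f (i + r); have f7 := f (s + t + i)
  have f8 := f (i + s); have f9 := f (t + r)
  rw [e1, e2, e3, e4, e5, hs, hi]
  generalize ((i + r + (s + t))! : ℝ) = K
  generalize ((s + t)! : ℝ) = A at *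
  generalize ((i + r)! : ℝ) = B at *
  generalize ((s + t + i)! : ℝ) = C at *
  generalize ((i + s)! : ℝ) = D at *
  generalize ((t + r)! : ℝ) = E at *
  rw [pow_add x, pow_add (-1 : ℝ)]
  field_simp

/-- The binomial theorem divided by `j!`. -/
lemma sum_pow_div_factorial (j : ℕ) (x : ℝ) :
    ∑ s ∈ range (j + 1), x ^ s / (((j - s)! : ℝ) * (s ! : ℝ)) = (1 + x) ^ j / (j ! : ℝ) := by
  rw [add_comm 1 x, add_pow, Finset.sum_div]
  refine Finset.sum_congr rfl fun s hs => ?_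
  have hs' : s ≤ j := by simpa [Nat.lt_succ_iff] using hs
  have f (n : ℕ) : (n ! : ℝ) ≠ 0 := by exact_mod_cast n.factorial_ne_zero
  have f1 := f s; have f2 := f j; have f3 := f (j - s)
  rw [Nat.cast_choose ℝ hs', one_pow]
  field_simp

theorem lag2_x_sum (k : ℕ) (hk : 1 ≤ k) (x : ℝ) (hx : x ≠ 0) :
    ∑ n ∈ Finset.range (k + 1), x ^ (k - n) * (k.choose n : ℝ) * lag2 n (k - n) x (1 / x)
      = lag k 0 1 * (1 + x) ^ k := by
  have key : ∑ n ∈ range (k + 1), x ^ (k - n) * (k.choose n : ℝ) * lag2 n (k - n) x (1 / x)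
      = ∑ j ∈ range (k + 1), ∑ s ∈ range (j + 1), ∑ t ∈ range (k - j + 1),
        (k ! : ℝ) * (-1) ^ j * (k.choose j) * (x ^ s / (((j - s)! : ℝ) * (s ! : ℝ))) *
          (((k - j).choose t : ℝ) * x ^ (k - j - t)) := by
    simp only [lag2, Finset.mul_sum, ← Finset.sum_product']
    rw [Finset.sum_sigma', Finset.sum_sigma']
    refine Finset.sum_bij'
      (fun p _ => (⟨p.2.1 + p.2.2, (p.2.2, p.1 - p.2.2)⟩ : (_ : ℕ) × ℕ × ℕ))
      (fun q _ => (⟨q.2.1 + q.2.2, (q.1 - q.2.1, q.2.1)⟩ : (_ : ℕ) × ℕ × ℕ)) ?_ ?_ ?_ ?_ ?_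
    · rintro ⟨n, i, s⟩ h
      simp only [mem_sigma, mem_product, mem_range] at h ⊢
      omega
    · rintro ⟨j, s, t⟩ h
      simp only [mem_sigma, mem_product, mem_range] at h ⊢
      omega
    · rintro ⟨n, i, s⟩ h
      simp only [mem_sigma, mem_product, mem_range] at h
      simp only [Nat.add_sub_cancel, Nat.add_sub_cancel' (show s ≤ n by omega)]
    · rintro ⟨j, s, t⟩ h
      simp only [mem_sigma, mem_product, mem_range] at h
      simp only [Nat.add_sub_cancel_left, Nat.sub_add_cancel (show s ≤ j by omega)]
    · rintro ⟨n, i, s⟩ h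
      simp only [mem_sigma, mem_product, mem_range] at h
      obtain ⟨t, rfl⟩ := Nat.exists_eq_add_of_le (show s ≤ n by omega)
      obtain ⟨r, hr⟩ := Nat.exists_eq_add_of_le (show i ≤ k - (s + t) by omega)
      obtain rfl : k = i + r + (s + t) := by omega
      have h1 : i + r + (s + t) - (i + s) = t + r := by omega
      simpa only [Nat.add_sub_cancel, Nat.add_sub_cancel_left, h1] using lag2_term i s t r x hx
  rw [key, lag, Finset.sum_mul]
  refine Finset.sum_congr rfl fun j hj => ?_
  have hj' : j ≤ k := by simpa [Nat.lt_succ_iff] using hj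
  have ht : ∑ t ∈ range (k - j + 1), ((k - j).choose t : ℝ) * x ^ (k - j - t)
      = (1 + x) ^ (k - j) := by
    rw [add_pow]
    exact Finset.sum_congr rfl fun t _ => by rw [one_pow]; ring
  simp only [← Finset.mul_sum, ht, ← Finset.sum_mul, sum_pow_div_factorial]
  rw [add_zero, Nat.choose_symm hj', ← pow_mul_pow_sub (1 + x) hj']
  ring
end
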